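/- Let s ∈ ℝ and let f_n(x) = 2^{-ns} φ(x) sin((17/12)·2^n x) and g_n(x) = 2^{-n} φ(x). For every sufficiently large integer n, the Fourier transform of the product g_n ∂_x f_n is supported in the annulus {ξ ∈ ℝ : (17/12)·2^n − 1 ≤ |ξ| ≤ (17/12)·2^n + 1}. -/

import Mathlib

open MeasureTheory Filter

/-- Fourier transform with convention `f̂(ξ) = ∫ f(x) e^{-i x ξ} dx`. -/
noncomputable def fourierT (f : ℝ → ℂ) (ξ : ℝ) : ℂ :=
  ∫ x : ℝ, f x * Complex.exp (-(Complex.I * x * ξ))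

/-- The `H^s(ℝ)` norm, `‖f‖_{H^s}² = ∫ (1+|ξ|²)^s |f̂(ξ)|² dξ`. -/
noncomputable def sobolevNorm (s : ℝ) (f : ℝ → ℂ) : ℝ :=
  Real.sqrt (∫ ξ : ℝ, (1 + ξ ^ 2) ^ s * ‖fourierT f ξ‖ ^ 2)

/-- Membership in `H^s(ℝ)` (for integrable representatives). -/
def MemSobolev (s : ℝ) (f : ℝ → ℂ) : Prop :=
  MeasureTheory.Integrable f ∧
    MeasureTheory.Integrable (fun ξ : ℝ => (1 + ξ ^ 2) ^ s * ‖fourierT f ξ‖ ^ 2)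

/-- The high-frequency functions `f_n(x) = 2^{-ns} φ(x) sin((17/12)·2^n x)`. -/
noncomputable def fn (s : ℝ) (φ : ℝ → ℂ) (n : ℕ) : ℝ → ℂ :=
  fun x => (((2 : ℝ) ^ (-(n : ℝ) * s) * Real.sin (17 / 12 * 2 ^ n * x) : ℝ) : ℂ) * φ x

/-- The low-frequency functions `g_n(x) = 2^{-n} φ(x)`. -/
noncomputable def gn (φ : ℝ → ℂ) (n : ℕ) : ℝ → ℂ :=
  fun x => (((2 : ℝ) ^ (-(n : ℝ)) : ℝ) : ℂ) * φ x

/-- `φ̂` is an even, real-valued, nonnegative function in `C_c^∞(ℝ)` with `φ̂ = 1` on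
`{|ξ| ≤ 1/4}` and `φ̂ = 0` on `{|ξ| ≥ 1/2}`, and `φ` is the (continuous, integrable)
function on `ℝ` whose Fourier transform is `φ̂`. -/
structure CutoffPair (φhat : ℝ → ℝ) (φ : ℝ → ℂ) : Prop where
  smooth : ContDiff ℝ (⊤ : ℕ∞) φhat
  compactSupport : HasCompactSupport φhat
  even : ∀ ξ : ℝ, φhat (-ξ) = φhat ξ
  nonneg : ∀ ξ : ℝ, 0 ≤ φhat ξ
  eq_one : ∀ ξ : ℝ, |ξ| ≤ 1 / 4 → φhat ξ = 1
  eq_zero : ∀ ξ : ℝ, 1 / 2 ≤ |ξ| → φhat ξ = 0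
  continuous : Continuous φ
  integrable : MeasureTheory.Integrable φ
  fourier_eq : ∀ ξ : ℝ, fourierT φ ξ = (φhat ξ : ℂ)


open FourierTransform in
lemma fourierT_eq (f : ℝ → ℂ) (w : ℝ) : 𝓕 f w = fourierT f (2 * Real.pi * w) := by
  rw [Real.fourier_real_eq_integral_exp_smul, fourierT]
  congr 1
  ext x
  rw [smul_eq_mul, mul_comm]
  congr 2
  push_cast
  ring

open FourierTransform in
/-- `φ` is the Fourier transform of a Schwartz function, `w ↦ φhat (2πw)`. -/
lemma cutoff_schwartz {φhat : ℝ → ℝ} {φ : ℝ → ℂ} (h : CutoffPair φhat φ) :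
    ∃ ψ : SchwartzMap ℝ ℂ, (∀ w, ψ w = (φhat (2 * Real.pi * w) : ℂ)) ∧
      φ = ⇑(𝓕 ψ : SchwartzMap ℝ ℂ) := by
  have hcs : HasCompactSupport (fun w : ℝ => (φhat (2 * Real.pi * w) : ℂ)) := by
    have h1 : HasCompactSupport (fun w : ℝ => φhat (2 * Real.pi * w)) := by
      have := h.compactSupport.comp_homeomorph
        (Homeomorph.mulLeft₀ (2 * Real.pi) (by positivity))
      exact this
    exact h1.comp_left (g := fun r : ℝ => (r : ℂ)) (by simp)
  have hsm : ContDiff ℝ (⊤ : ℕ∞) (fun w : ℝ => (φhat (2 * Real.pi * w) : ℂ)) := by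
    refine Complex.ofRealCLM.contDiff.comp (h.smooth.comp ?_)
    fun_prop
  refine ⟨hcs.toSchwartzMap hsm, fun w => rfl, ?_⟩
  set ψ : SchwartzMap ℝ ℂ := hcs.toSchwartzMap hsm with hψ
  have hψv : ∀ w, ψ w = (φhat (2 * Real.pi * w) : ℂ) := fun w => rfl
  have hF : 𝓕 φ = ⇑ψ := by
    ext w
    rw [fourierT_eq, h.fourier_eq, hψv]
  have hint : Integrable (𝓕 φ) := by
    rw [hF]; exact ψ.integrable
  have hinv := h.continuous.fourierInv_fourier_eq h.integrable hint
  rw [SchwartzMap.fourier_coe, ← hinv, hF]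
  ext x
  rw [Real.fourierInv_eq_fourier_comp_neg]
  have hev : (fun w => ψ (-w)) = ⇑ψ := by
    ext w
    rw [hψv, hψv, mul_neg, h.even]
  rw [hev]

open FourierTransform in
lemma fourierT_mul_zero {φhat : ℝ → ℝ} {φ : ℝ → ℂ} (h : CutoffPair φhat φ)
    {χ : ℝ → ℂ} (hχ : Integrable χ) (ξ : ℝ)
    (hz : ∀ t : ℝ, |t| < 1 / 2 → fourierT χ (ξ + t) = 0) :
    ∫ x : ℝ, φ x * (χ x * Complex.exp (-(Complex.I * x * ξ))) = 0 := by
  obtain ⟨ψ, hψ, hφ⟩ := cutoff_schwartz h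
  set G : ℝ → ℂ := fun x => χ x * Complex.exp (-(Complex.I * x * ξ)) with hG
  have hGi : Integrable G := by
    refine hχ.mul_bdd (c := 1) (by fun_prop) ?_
    refine Eventually.of_forall fun x => ?_
    rw [Complex.norm_exp]
    simp
  have key : ∫ x, (𝓕 (ψ : ℝ → ℂ)) x • G x = ∫ x, ψ x • (𝓕 G) x := by
    simpa using! (VectorFourier.integral_fourierIntegral_smul_eq_flip (L := innerₗ ℝ)
      (μ := volume) (ν := volume) Real.continuous_fourierChar continuous_inner ψ.integrable hGi)
  rw [hφ, SchwartzMap.fourier_coe]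
  refine key.trans ?_
  refine integral_eq_zero_of_ae (Eventually.of_forall fun w => ?_)
  by_cases hw : 1 / 2 ≤ |2 * Real.pi * w|
  · simp [hψ, h.eq_zero _ hw]
  · have h1 := hz _ (not_le.mp hw)
    have h2 : 𝓕 G w = fourierT χ (ξ + 2 * Real.pi * w) := by
      rw [fourierT_eq, fourierT, fourierT]
      congr 1
      ext x
      rw [hG]
      simp only
      rw [mul_assoc, ← Complex.exp_add]
      congr 2
      push_cast
      ring
    simp [h2, h1]

lemma exp_bdd_integrable {φ : ℝ → ℂ} (h : Integrable φ) (ξ : ℝ) :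
    Integrable (fun x : ℝ => φ x * Complex.exp (-(Complex.I * x * ξ))) := by
  refine h.mul_bdd (c := 1) (by fun_prop) ?_
  refine Eventually.of_forall fun x => ?_
  rw [Complex.norm_exp]
  simp

/-- The Fourier transform of `c sin(A x) φ(x)`. -/
lemma fourierT_sin {φ : ℝ → ℂ} (h : Integrable φ) (c A ξ : ℝ) :
    fourierT (fun x => ((c * Real.sin (A * x) : ℝ) : ℂ) * φ x) ξ =
      c * Complex.I / 2 * (fourierT φ (ξ + A) - fourierT φ (ξ - A)) := by
  unfold fourierT
  rw [← integral_sub (exp_bdd_integrable h _) (exp_bdd_integrable h _), ← integral_const_mul]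
  congr 1
  ext x
  push_cast
  rw [Complex.sin]
  have e1 : Complex.exp (-(Complex.I * x * (ξ + A))) =
      Complex.exp (-(A * x) * Complex.I) * Complex.exp (-(Complex.I * x * ξ)) := by
    rw [← Complex.exp_add]; congr 1; ring
  have e2 : Complex.exp (-(Complex.I * x * (ξ - A))) =
      Complex.exp (A * x * Complex.I) * Complex.exp (-(Complex.I * x * ξ)) := by
    rw [← Complex.exp_add]; congr 1; ring
  rw [e1, e2]
  ring

open FourierTransform in
/-- The derivative of `c sin(A x) φ(x)` is integrable, with the expected Fourier transform. -/
lemma deriv_modulated {φhat : ℝ → ℝ} {φ : ℝ → ℂ} (h : CutoffPair φhat φ) (c A : ℝ) :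
    Integrable (deriv (fun x => ((c * Real.sin (A * x) : ℝ) : ℂ) * φ x)) ∧
    ∀ ξ : ℝ, 1 / 2 ≤ |ξ + A| → 1 / 2 ≤ |ξ - A| →
      fourierT (deriv (fun x => ((c * Real.sin (A * x) : ℝ) : ℂ) * φ x)) ξ = 0 := by
  obtain ⟨ψ, hψ, hφ⟩ := cutoff_schwartz h
  set Φ : SchwartzMap ℝ ℂ := 𝓕 ψ with hΦ
  have hd : ∀ x, HasDerivAt (fun x => ((c * Real.sin (A * x) : ℝ) : ℂ) * φ x)
      (((c * (Real.cos (A * x) * A) : ℝ) : ℂ) * φ x +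
        ((c * Real.sin (A * x) : ℝ) : ℂ) * deriv φ x) x := by
    intro x
    have h1 : HasDerivAt (fun x : ℝ => c * Real.sin (A * x)) (c * (Real.cos (A * x) * A)) x := by
      have := ((hasDerivAt_id x).const_mul A).sin.const_mul c
      simpa using this
    have h2 : HasDerivAt φ (deriv φ x) x := by
      rw [hφ]
      exact Φ.differentiable.differentiableAt.hasDerivAt
    exact h1.ofReal_comp.mul h2
  have hde : deriv (fun x => ((c * Real.sin (A * x) : ℝ) : ℂ) * φ x) = fun x =>
      (((c * (Real.cos (A * x) * A) : ℝ) : ℂ) * φ x +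
        ((c * Real.sin (A * x) : ℝ) : ℂ) * deriv φ x) := funext fun x => (hd x).deriv
  have hdφ : Integrable (deriv φ) := by
    have := (SchwartzMap.derivCLM ℂ ℂ Φ).integrable (μ := volume)
    rw [hφ]
    exact this
  have hfi : Integrable (fun x => ((c * Real.sin (A * x) : ℝ) : ℂ) * φ x) := by
    refine h.integrable.bdd_mul (c := |c|) (by fun_prop) (Eventually.of_forall fun x => ?_)
    rw [Complex.norm_real, norm_mul, Real.norm_eq_abs, Real.norm_eq_abs]
    exact mul_le_of_le_one_right (abs_nonneg _) (Real.abs_sin_le_one _)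
  have hi : Integrable (deriv (fun x => ((c * Real.sin (A * x) : ℝ) : ℂ) * φ x)) := by
    rw [hde]
    refine Integrable.add ?_ ?_
    · refine h.integrable.bdd_mul (c := |c| * |A|) (by fun_prop) (Eventually.of_forall fun x => ?_)
      rw [Complex.norm_real, norm_mul, norm_mul, Real.norm_eq_abs, Real.norm_eq_abs,
        Real.norm_eq_abs]
      gcongr
      exact mul_le_of_le_one_left (abs_nonneg _) (Real.abs_cos_le_one _)
    · refine hdφ.bdd_mul (c := |c|) (by fun_prop) (Eventually.of_forall fun x => ?_)
      rw [Complex.norm_real, norm_mul, Real.norm_eq_abs, Real.norm_eq_abs]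
      exact mul_le_of_le_one_right (abs_nonneg _) (Real.abs_sin_le_one _)
  refine ⟨hi, fun ξ h1 h2 => ?_⟩
  have hF := congrFun (Real.fourier_deriv hfi (fun x => (hd x).differentiableAt) hi)
    (ξ / (2 * Real.pi))
  have hξ : 2 * Real.pi * (ξ / (2 * Real.pi)) = ξ := by field_simp
  simp only [fourierT_eq, hξ] at hF
  rw [hF, fourierT_sin h.integrable, h.fourier_eq, h.fourier_eq, h.eq_zero _ h1, h.eq_zero _ h2]
  simp

/-- For all sufficiently large `n`, the Fourier transform of `g_n ∂_x f_n` is supported in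
the annulus `{ξ : (17/12)·2^n − 1 ≤ |ξ| ≤ (17/12)·2^n + 1}`. -/
theorem fourier_support_gn_deriv_fn (s : ℝ) (φhat : ℝ → ℝ) (φ : ℝ → ℂ)
    (hφ : CutoffPair φhat φ) :
    ∃ N : ℕ, ∀ n : ℕ, N ≤ n → ∀ ξ : ℝ,
      fourierT (fun x => gn φ n x * deriv (fn s φ n) x) ξ ≠ 0 →
        17 / 12 * 2 ^ n - 1 ≤ |ξ| ∧ |ξ| ≤ 17 / 12 * 2 ^ n + 1 := by
  refine ⟨0, fun n _ ξ hne => ?_⟩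
  set A : ℝ := 17 / 12 * 2 ^ n with hA
  have hA1 : 1 ≤ A := by
    have : (1 : ℝ) ≤ 2 ^ n := one_le_pow₀ (by norm_num)
    rw [hA]; linarith
  by_contra hcon
  apply hne
  obtain ⟨hi, hz⟩ := deriv_modulated hφ ((2 : ℝ) ^ (-(n : ℝ) * s)) A
  have hfn : fn s φ n =
      fun x => (((2 : ℝ) ^ (-(n : ℝ) * s) * Real.sin (A * x) : ℝ) : ℂ) * φ x := rfl
  rw [← hfn] at hi hz
  have hfar : 1 < |ξ + A| ∧ 1 < |ξ - A| := by
    constructor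
    · by_contra hh
      rw [not_lt, abs_le] at hh
      apply hcon
      rcases abs_cases ξ with h | h <;> constructor <;> linarith
    · by_contra hh
      rw [not_lt, abs_le] at hh
      apply hcon
      rcases abs_cases ξ with h | h <;> constructor <;> linarith
  have h0 := fourierT_mul_zero hφ hi ξ (fun t ht => by
    apply hz
    · have := abs_sub_abs_le_abs_sub (ξ + A) (-t)
      rw [abs_neg, sub_neg_eq_add, add_right_comm] at this
      linarith [hfar.1]
    · have := abs_sub_abs_le_abs_sub (ξ - A) (-t)
      rw [abs_neg, sub_neg_eq_add] at this
      rw [show ξ + t - A = ξ - A + t by ring]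
      linarith [hfar.2])
  unfold fourierT gn
  simp only [mul_assoc] at h0 ⊢
  rw [integral_const_mul, h0, mul_zero]
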